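/- Let C > 0 and define, on the set S = {(x,t) : t > 0, |x| < C e^{−π² t}}, the function U(x,t) = (1/π) arccos(−x e^{π² t}/C). Then U solves the reduced equation ∂_t U = ∂ₓ²U / (∂ₓU)² on S (equivalently ∂_t U = ∂ₓ(Φ(∂ₓU)) with Φ(s) = −1/s); U takes the boundary values U = 0 at the left interface x = L(t) = −C e^{−π² t} and U = 1 at the right interface x = R(t) = C e^{−π² t}; and the gradient ∂ₓU(x,t) = e^{π² t}/(π C sin(π U(x,t))) tends to +∞ as x approaches either interface and blows up exponentially, like e^{π² t}, as t → ∞ at interior points. -/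

import Mathlib

open Set Filter Topology Real

/-!
Interchanging the roles of `x` and `u` (the hodograph transform) turns `u_t = u_xx / u_x ^ 2` into
the heat equation `z_t = z_uu`. The separated solution `x = -C e ^ (-k² t) cos (k u)` of the latter,
solved for `u`, is `u = F (x e ^ (k² t))` with `cos (k F ξ) = -ξ / C`. For a self-similar function
of this form the equation reduces to `k² ξ F' = F'' / F' ^ 2`, and differentiating `cos (k F)` gives
`F' = 1 / (k C sin (k F))`. The sine vanishes exactly at the interfaces `ξ = ±C`, where `F'`
therefore blows up.
-/

section Dilation

lemma abs_lt_mul_exp_neg_iff {C r x t : ℝ} :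
    |x| < C * exp (-r * t) ↔ |x * exp (r * t)| < C := by
  rw [neg_mul, exp_neg, ← div_eq_mul_inv, lt_div_iff₀ (exp_pos _), abs_mul, abs_exp]

lemma mul_exp_neg_mul_exp (C r t : ℝ) : C * exp (-r * t) * exp (r * t) = C := by
  rw [mul_assoc, ← exp_add, neg_mul, neg_add_cancel, exp_zero, mul_one]

variable {a b c : ℝ}

lemma tendsto_mul_const_nhdsGT (hc : 0 < c) (hab : a * c = b) :
    Tendsto (· * c) (𝓝[>] a) (𝓝[>] b) :=
  hab ▸ (continuous_mul_const c).continuousWithinAt.tendsto_nhdsWithin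
    fun _ hx => mul_lt_mul_of_pos_right hx hc

lemma tendsto_mul_const_nhdsLT (hc : 0 < c) (hab : a * c = b) :
    Tendsto (· * c) (𝓝[<] a) (𝓝[<] b) :=
  hab ▸ (continuous_mul_const c).continuousWithinAt.tendsto_nhdsWithin
    fun _ hx => mul_lt_mul_of_pos_right hx hc

end Dilation

section SelfSimilar

variable (F : ℝ → ℝ)

lemma deriv_comp_dilation (c x : ℝ) :
    deriv (fun y => F (y * c)) x = c * deriv F (x * c) := by
  simpa only [mul_comm, smul_eq_mul] using deriv_comp_mul_left c F x

lemma deriv_deriv_comp_dilation (c x : ℝ) :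
    deriv (deriv (fun y => F (y * c))) x = c ^ 2 * deriv (deriv F) (x * c) := by
  rw [funext (deriv_comp_dilation F c), deriv_const_mul_field, deriv_comp_dilation]
  ring

variable {F}

lemma deriv_comp_mul_exp {r x t : ℝ} (hF : DifferentiableAt ℝ F (x * exp (r * t))) :
    deriv (fun s => F (x * exp (r * s))) t =
      r * (x * exp (r * t)) * deriv F (x * exp (r * t)) := by
  have hξ : HasDerivAt (fun s => x * exp (r * s)) (x * (exp (r * t) * r)) t :=
    (by simpa using (hasDerivAt_id t).const_mul r : HasDerivAt (r * ·) r t).exp.const_mul x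
  exact (hF.hasDerivAt.comp t hξ).deriv.trans (by ring)

theorem selfSimilar_solves_reduced_equation {r x t : ℝ}
    (hF : DifferentiableAt ℝ F (x * exp (r * t)))
    (hode : r * (x * exp (r * t)) * deriv F (x * exp (r * t)) =
      deriv (deriv F) (x * exp (r * t)) / deriv F (x * exp (r * t)) ^ 2) :
    deriv (fun s => F (x * exp (r * s))) t =
      deriv (deriv (fun y => F (y * exp (r * t)))) x /
        deriv (fun y => F (y * exp (r * t))) x ^ 2 := by
  rw [deriv_comp_mul_exp hF, hode, deriv_deriv_comp_dilation, deriv_comp_dilation, mul_pow,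
    mul_div_mul_left _ _ (pow_ne_zero 2 (exp_ne_zero _))]

lemma tendsto_deriv_comp_dilation {c : ℝ} (hc : 0 < c) {l l' : Filter ℝ}
    (hl : Tendsto (· * c) l l') (hF : Tendsto (deriv F) l' atTop) :
    Tendsto (deriv (fun y => F (y * c))) l atTop := by
  rw [funext (deriv_comp_dilation F c)]
  exact (hF.comp hl).const_mul_atTop hc

lemma tendsto_deriv_comp_mul_exp_atTop {r ξ : ℝ} (hr : 0 < r) (hξ : 0 < deriv F ξ) :
    Tendsto (fun t => deriv (fun y => F (y * exp (r * t))) (ξ * exp (-r * t))) atTop atTop := by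
  have hderiv (t : ℝ) : deriv (fun y => F (y * exp (r * t))) (ξ * exp (-r * t)) =
      exp (r * t) * deriv F ξ := by
    rw [deriv_comp_dilation, mul_exp_neg_mul_exp]
  simp only [hderiv]
  exact (tendsto_exp_atTop.comp (tendsto_id.const_mul_atTop hr)).atTop_mul_const hξ

end SelfSimilar

/-- For `k, C > 0`, the increasing solution `u` of `-C cos (k u) = ξ`, `ξ ∈ [-C, C]`, with values in
`[0, π / k]`: the profile of the self-similar solution that inverts the mode
`-C e ^ (-k² t) cos (k u)` of the heat equation. -/
noncomputable def arccosProfile (k C ξ : ℝ) : ℝ := (1 / k) * arccos (-ξ / C)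

namespace arccosProfile

variable {k C ξ : ℝ}

lemma mul_eq_arccos (hk : k ≠ 0) : k * arccosProfile k C ξ = arccos (-ξ / C) := by
  rw [arccosProfile, ← mul_assoc, mul_one_div_cancel hk, one_mul]

lemma apply_neg_self (hC : C ≠ 0) : arccosProfile k C (-C) = 0 := by
  rw [arccosProfile, neg_neg, div_self hC, arccos_one, mul_zero]

lemma apply_self (hC : C ≠ 0) : arccosProfile k C C = π / k := by
  rw [arccosProfile, neg_div, div_self hC, arccos_neg_one, one_div_mul_eq_div]

protected lemma continuous : Continuous (arccosProfile k C) := by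
  unfold arccosProfile
  fun_prop

lemma neg_div_mem_Ioo (hξ : |ξ| < C) : -ξ / C ∈ Ioo (-1) 1 := by
  have hC : 0 < C := (abs_nonneg ξ).trans_lt hξ
  rw [mem_Ioo, ← abs_lt, abs_div, abs_neg, abs_of_pos hC, div_lt_one hC]
  exact hξ

lemma sin_pos (hk : k ≠ 0) (hξ : |ξ| < C) : 0 < sin (k * arccosProfile k C ξ) := by
  have hmem := neg_div_mem_Ioo hξ
  rw [mul_eq_arccos hk]
  exact Real.sin_pos_of_pos_of_lt_pi (arccos_pos.2 hmem.2) (arccos_lt_pi.2 hmem.1)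

lemma cos_eq (hk : k ≠ 0) (hξ : |ξ| < C) : cos (k * arccosProfile k C ξ) = -ξ / C := by
  have hmem := neg_div_mem_Ioo hξ
  rw [mul_eq_arccos hk, cos_arccos hmem.1.le hmem.2.le]

protected lemma hasDerivAt (hk : k ≠ 0) (hξ : |ξ| < C) :
    HasDerivAt (arccosProfile k C) (1 / (k * C * sin (k * arccosProfile k C ξ))) ξ := by
  have hmem := neg_div_mem_Ioo hξ
  have harg : HasDerivAt (fun η : ℝ => -η / C) (-1 / C) ξ := (hasDerivAt_neg ξ).div_const C
  refine (((hasDerivAt_arccos hmem.1.ne' hmem.2.ne).comp ξ harg).const_mul (1 / k)).congr_deriv ?_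
  rw [mul_eq_arccos hk, sin_arccos]
  ring

lemma deriv_pos (hk : 0 < k) (hξ : |ξ| < C) : 0 < deriv (arccosProfile k C) ξ := by
  have hC : 0 < C := (abs_nonneg ξ).trans_lt hξ
  have hsin := sin_pos hk.ne' hξ
  rw [(arccosProfile.hasDerivAt hk.ne' hξ).deriv]
  positivity

lemma hasDerivAt_deriv (hk : k ≠ 0) (hξ : |ξ| < C) :
    HasDerivAt (deriv (arccosProfile k C)) (k ^ 2 * ξ * deriv (arccosProfile k C) ξ ^ 3) ξ := by
  have hC : C ≠ 0 := ((abs_nonneg ξ).trans_lt hξ).ne'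
  have hsin := (sin_pos hk hξ).ne'
  have hF := arccosProfile.hasDerivAt hk hξ
  have hderiv : deriv (arccosProfile k C) =ᶠ[𝓝 ξ]
      fun η => (k * C * sin (k * arccosProfile k C η))⁻¹ := by
    filter_upwards [continuous_abs.continuousAt.eventually_lt_const hξ] with η hη
    rw [(arccosProfile.hasDerivAt hk hη).deriv, one_div]
  have hinv := ((hF.const_mul k).sin.const_mul (k * C)).inv (by positivity)
  refine (hinv.congr_of_eventuallyEq hderiv).congr_deriv ?_
  rw [hF.deriv, cos_eq hk hξ]
  field_simp

lemma ode (hk : 0 < k) (hξ : |ξ| < C) :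
    k ^ 2 * ξ * deriv (arccosProfile k C) ξ =
      deriv (deriv (arccosProfile k C)) ξ / deriv (arccosProfile k C) ξ ^ 2 := by
  have hpos := deriv_pos hk hξ
  rw [(hasDerivAt_deriv hk.ne' hξ).deriv]
  field_simp

lemma tendsto_deriv (hk : 0 < k) (hC : 0 < C) {a : ℝ}
    (ha : sin (k * arccosProfile k C a) = 0) :
    Tendsto (deriv (arccosProfile k C)) (𝓝[Ioo (-C) C] a) atTop := by
  have habs : ∀ᶠ ξ in 𝓝[Ioo (-C) C] a, |ξ| < C :=
    eventually_mem_nhdsWithin.mono fun _ => abs_lt.2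
  have hcont : Continuous fun ξ => k * C * sin (k * arccosProfile k C ξ) :=
    continuous_const.mul (continuous_sin.comp (continuous_const.mul arccosProfile.continuous))
  have hzero : Tendsto (fun ξ => k * C * sin (k * arccosProfile k C ξ))
      (𝓝[Ioo (-C) C] a) (𝓝[>] 0) := by
    refine tendsto_nhdsWithin_iff.2 ⟨?_, habs.mono fun ξ hξ => ?_⟩
    · simpa only [ha, mul_zero] using hcont.continuousWithinAt.tendsto (x := a)
    · exact mul_pos (mul_pos hk hC) (sin_pos hk.ne' hξ)
  refine hzero.inv_tendsto_nhdsGT_zero.congr' (habs.mono fun ξ hξ => ?_)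
  rw [(arccosProfile.hasDerivAt hk.ne' hξ).deriv, one_div, Pi.inv_apply]

lemma tendsto_deriv_nhdsGT_neg (hk : 0 < k) (hC : 0 < C) :
    Tendsto (deriv (arccosProfile k C)) (𝓝[>] (-C)) atTop := by
  rw [← nhdsWithin_Ioo_eq_nhdsGT (neg_lt_self hC)]
  exact tendsto_deriv hk hC (by rw [apply_neg_self hC.ne', mul_zero, sin_zero])

lemma tendsto_deriv_nhdsLT (hk : 0 < k) (hC : 0 < C) :
    Tendsto (deriv (arccosProfile k C)) (𝓝[<] C) atTop := by
  rw [← nhdsWithin_Ioo_eq_nhdsLT (neg_lt_self hC)]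
  exact tendsto_deriv hk hC (by rw [apply_self hC.ne', mul_div_cancel₀ _ hk.ne', sin_pi])

end arccosProfile

theorem alpha_zero_selfSimilar_solution_general {k : ℝ} (hk : 0 < k)
    {C : ℝ} (hC : 0 < C) {U : ℝ → ℝ → ℝ}
    (hU : ∀ x t : ℝ, U x t = (1 / k) * arccos (-(x * exp (k ^ 2 * t)) / C)) :
    (∀ x t : ℝ, |x| < C * exp (-(k ^ 2) * t) →
      deriv (fun s => U x s) t =
        deriv (deriv (fun y => U y t)) x / (deriv (fun y => U y t) x) ^ 2) ∧
    (∀ t : ℝ, U (-(C * exp (-(k ^ 2) * t))) t = 0 ∧ U (C * exp (-(k ^ 2) * t)) t = π / k) ∧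
    (∀ x t : ℝ, |x| < C * exp (-(k ^ 2) * t) →
      deriv (fun y => U y t) x = exp (k ^ 2 * t) / (k * C * sin (k * U x t))) ∧
    (∀ t : ℝ,
      Tendsto (deriv (fun y => U y t)) (𝓝[>] (-(C * exp (-(k ^ 2) * t)))) atTop ∧
      Tendsto (deriv (fun y => U y t)) (𝓝[<] (C * exp (-(k ^ 2) * t))) atTop) ∧
    ∀ ξ : ℝ, |ξ| < C →
      Tendsto (fun t => deriv (fun y => U y t) (ξ * exp (-(k ^ 2) * t))) atTop atTop := by
  obtain rfl : U = fun x t => arccosProfile k C (x * exp (k ^ 2 * t)) := funext₂ hU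
  have hright (t : ℝ) := mul_exp_neg_mul_exp C (k ^ 2) t
  have hleft (t : ℝ) : -(C * exp (-(k ^ 2) * t)) * exp (k ^ 2 * t) = -C := by
    rw [neg_mul, hright]
  refine ⟨fun x t hx => ?_, fun t => ?_, fun x t hx => ?_, fun t => ?_, fun ξ hξ => ?_⟩
  · have hξ := abs_lt_mul_exp_neg_iff.1 hx
    exact selfSimilar_solves_reduced_equation
      (arccosProfile.hasDerivAt hk.ne' hξ).differentiableAt (arccosProfile.ode hk hξ)
  · simp only [hleft, hright, arccosProfile.apply_neg_self hC.ne', arccosProfile.apply_self hC.ne',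
      and_self]
  · have hξ := abs_lt_mul_exp_neg_iff.1 hx
    rw [deriv_comp_dilation, (arccosProfile.hasDerivAt hk.ne' hξ).deriv, mul_one_div]
  · have hE := exp_pos (k ^ 2 * t)
    exact ⟨tendsto_deriv_comp_dilation hE (tendsto_mul_const_nhdsGT hE (hleft t))
        (arccosProfile.tendsto_deriv_nhdsGT_neg hk hC),
      tendsto_deriv_comp_dilation hE (tendsto_mul_const_nhdsLT hE (hright t))
        (arccosProfile.tendsto_deriv_nhdsLT hk hC)⟩
  · exact tendsto_deriv_comp_mul_exp_atTop (pow_pos hk 2) (arccosProfile.deriv_pos hk hξ)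

/-- the case `α = 0`, Section 8 of Barenblatt–Vázquez.
On the strip `S = {(x,t) : t > 0, |x| < C e^{−π²t}}` the function
`U(x,t) = (1/π) arccos(−x e^{π²t}/C)` solves the reduced equation
`U_t = U_{xx}/(U_x)²` (i.e. `U_t = (Φ(U_x))_x` with `Φ(s) = −1/s`), takes the
boundary values `0` and `1` at the interfaces `L(t) = −C e^{−π²t}` and
`R(t) = C e^{−π²t}`, and its gradient `U_x = e^{π²t}/(πC sin(πU))` tends to `+∞`
at either interface and blows up exponentially, like `e^{π²t}`, as `t → ∞` at
the interior point `x = 0`. -/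
theorem alpha_zero_selfSimilar_solution
    (C : ℝ) (hC : 0 < C) (U : ℝ → ℝ → ℝ)
    (hU : ∀ x t : ℝ, U x t = (1 / π) * Real.arccos (-(x * Real.exp (π ^ 2 * t)) / C)) :
    (∀ x t : ℝ, 0 < t → |x| < C * Real.exp (-(π ^ 2) * t) →
      deriv (fun s => U x s) t =
        deriv (deriv (fun y => U y t)) x / (deriv (fun y => U y t) x) ^ 2) ∧
    (∀ t : ℝ, 0 < t →
      U (-(C * Real.exp (-(π ^ 2) * t))) t = 0 ∧ U (C * Real.exp (-(π ^ 2) * t)) t = 1) ∧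
    (∀ x t : ℝ, 0 < t → |x| < C * Real.exp (-(π ^ 2) * t) →
      deriv (fun y => U y t) x =
        Real.exp (π ^ 2 * t) / (π * C * Real.sin (π * U x t))) ∧
    (∀ t : ℝ, 0 < t →
      Tendsto (fun x => deriv (fun y => U y t) x)
        (nhdsWithin (-(C * Real.exp (-(π ^ 2) * t))) (Ioi (-(C * Real.exp (-(π ^ 2) * t)))))
        atTop ∧
      Tendsto (fun x => deriv (fun y => U y t) x)
        (nhdsWithin (C * Real.exp (-(π ^ 2) * t)) (Iio (C * Real.exp (-(π ^ 2) * t))))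
        atTop) ∧
    Tendsto (fun t => deriv (fun y => U y t) 0) atTop atTop := by
  obtain ⟨heq, hbdry, hgrad, hint, hinf⟩ := alpha_zero_selfSimilar_solution_general pi_pos hC hU
  exact ⟨fun x t _ => heq x t, fun t _ => div_self pi_ne_zero ▸ hbdry t, fun x t _ => hgrad x t,
    fun t _ => hint t, by simpa only [zero_mul] using hinf 0 (abs_zero.trans_lt hC)⟩
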